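/- Let h = a𝐞 + b𝐢 + c𝐣 + d𝐤 ∈ 𝔻 (a,b,c,d ∈ ℝ) and let u ∈ 𝔻 be unimodular, i.e., u♭u = 𝐞 where u♭ = 𝐢⁻¹u†𝐢. Then u♭hu ∈ 𝔻, and writing u♭hu = a'𝐞 + b'𝐢 + c'𝐣 + d'𝐤 with a',b',c',d' ∈ ℝ, the quantities a' = a and −b'² + c'² + d'² = −b² + c² + d² are invariant. Moreover, if A is a square 𝔻-matrix, v a 𝔻-vector and h ∈ 𝔻 satisfy the right-eigenvalue equation A·v = v·h, then A·(vu) = (vu)·(u♭hu), so u♭hu is also a right eigenvalue of A. -/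

import Mathlib

open Matrix Complex

/-- `Δ(α,β) = [[α, β],[β̄, ᾱ]]`. -/
noncomputable def Delta (α β : ℂ) : Matrix (Fin 2) (Fin 2) ℂ :=
  !![α, β; starRingEnd ℂ β, starRingEnd ℂ α]

/-- The set `𝔻` of all matrices of the form `Δ(α,β)`. -/
noncomputable def Dset : Set (Matrix (Fin 2) (Fin 2) ℂ) :=
  {p | ∃ α β : ℂ, p = Delta α β}

/-- The ♭-conjugate `p♭ = 𝐢⁻¹ p† 𝐢`, where `𝐢 = Δ(i,0)`. -/
noncomputable def flat (p : Matrix (Fin 2) (Fin 2) ℂ) : Matrix (Fin 2) (Fin 2) ℂ :=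
  (Delta Complex.I 0)⁻¹ * pᴴ * Delta Complex.I 0

theorem Delta_mul_aux (α β γ δ : ℂ) : Delta α β * Delta γ δ =
    Delta (α * γ + β * starRingEnd ℂ δ) (α * δ + β * starRingEnd ℂ γ) := by
  ext i j
  fin_cases i <;> fin_cases j <;> simp [Delta, Matrix.mul_apply, Fin.sum_univ_two] <;> ring

theorem flat_Delta_aux (α β : ℂ) : flat (Delta α β) = Delta (starRingEnd ℂ α) (-β) := by
  have hinv : (Delta Complex.I 0)⁻¹ = Delta (-Complex.I) 0 := by
    apply Matrix.inv_eq_left_inv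
    ext i j
    fin_cases i <;> fin_cases j <;> simp [Delta, Matrix.mul_apply, Fin.sum_univ_two]
  have hc : (Delta α β)ᴴ = Delta (starRingEnd ℂ α) β := by
    ext i j
    fin_cases i <;> fin_cases j <;> simp [Delta]
  rw [flat, hinv, hc, Delta_mul_aux, Delta_mul_aux]
  have hI := Complex.I_mul_I
  congr 1
  · simp
    linear_combination (-(starRingEnd ℂ α)) * hI
  · simp
    linear_combination β * hI

theorem comb_Delta_aux (a b c d : ℝ) :
    a • Delta 1 0 + b • Delta Complex.I 0 + c • Delta 0 1 + d • Delta 0 Complex.I =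
      Delta (a + b * Complex.I) (c + d * Complex.I) := by
  ext i j
  fin_cases i <;> fin_cases j <;> simp [Delta]

theorem trace_aux (a b c d : ℝ) :
    (Delta (a + b * Complex.I) (c + d * Complex.I)).trace = ((2 * a : ℝ) : ℂ) := by
  simp [Delta, Matrix.trace, Fin.sum_univ_two]
  ring

theorem det_aux (a b c d : ℝ) :
    (Delta (a + b * Complex.I) (c + d * Complex.I)).det =
      ((a ^ 2 + b ^ 2 - c ^ 2 - d ^ 2 : ℝ) : ℂ) := by
  simp [Delta, Matrix.det_fin_two]
  linear_combination (-(b : ℂ) ^ 2 + d ^ 2) * Complex.I_mul_I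

/-- Unimodular equivalence of right eigenvalues: for `h = a𝐞+b𝐢+c𝐣+d𝐤 ∈ 𝔻` and a
unimodular `u ∈ 𝔻` (`u♭u = 𝐞`), the transform `u♭hu` lies in `𝔻`, has the same
invariants `a` and `−b²+c²+d²`, and whenever `A·v = v·h` (right-eigenvalue equation for a
`𝔻`-matrix `A` and a `𝔻`-vector `v`) one also has `A·(vu) = (vu)·(u♭hu)`. -/
theorem right_eigenvalue_unimodular_equivalence (a b c d : ℝ)
    (h u : Matrix (Fin 2) (Fin 2) ℂ)
    (hh : h = a • Delta 1 0 + b • Delta Complex.I 0 + c • Delta 0 1 + d • Delta 0 Complex.I)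
    (hu : u ∈ Dset) (huni : flat u * u = 1) :
    flat u * h * u ∈ Dset ∧
      (∀ a' b' c' d' : ℝ,
        flat u * h * u =
            a' • Delta 1 0 + b' • Delta Complex.I 0 + c' • Delta 0 1 + d' • Delta 0 Complex.I →
          a' = a ∧ -b' ^ 2 + c' ^ 2 + d' ^ 2 = -b ^ 2 + c ^ 2 + d ^ 2) ∧
      ∀ (n : ℕ) (A : Matrix (Fin (2 * n)) (Fin (2 * n)) ℂ)
        (v : Matrix (Fin (2 * n)) (Fin 2) ℂ),
        A * v = v * h → A * (v * u) = (v * u) * (flat u * h * u) := by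
  have huni' : u * flat u = 1 := mul_eq_one_comm.mp huni
  rw [comb_Delta_aux] at hh
  refine ⟨?_, ?_, ?_⟩
  · obtain ⟨α, β, rfl⟩ := hu
    rw [hh, flat_Delta_aux, Delta_mul_aux, Delta_mul_aux]
    exact ⟨_, _, rfl⟩
  · intro a' b' c' d' he
    rw [comb_Delta_aux] at he
    have ht : (flat u * h * u).trace = h.trace := by
      rw [Matrix.trace_mul_comm, ← Matrix.mul_assoc, huni', Matrix.one_mul]
    have hd : (flat u * h * u).det = h.det := by
      have h1 : (flat u).det * u.det = 1 := by rw [← Matrix.det_mul, huni, Matrix.det_one]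
      rw [Matrix.det_mul, Matrix.det_mul]
      linear_combination h.det * h1
    rw [he, hh, trace_aux, trace_aux, Complex.ofReal_inj] at ht
    rw [he, hh, det_aux, det_aux, Complex.ofReal_inj] at hd
    have haa : a' = a := by linarith
    subst haa
    exact ⟨rfl, by linarith⟩
  · intro n A v hA
    calc A * (v * u) = v * h * u := by rw [← Matrix.mul_assoc, hA]
      _ = v * (u * flat u) * h * u := by rw [huni', Matrix.mul_one]
      _ = (v * u) * (flat u * h * u) := by simp only [Matrix.mul_assoc]
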